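/- Let n ≥ 1, let ω ⊆ ℝⁿ be a nonempty open set and T > 0. Let u : ℝ × ℝⁿ → ℝ be of class C² on [0,T]×ℝⁿ and satisfy ∂ₜ²u(t,x) = Δu(t,x) for all (t,x) ∈ [0,T]×ℝⁿ, u(0,x) = 0 for all x ∈ ℝⁿ, and ∂ₜu(t,x) = 0 for all t ∈ (0,T) and x ∈ ω. Then ∂ₜu(0,x) = 0 for every x ∈ ℝⁿ with dist(x,ω) < T, where dist denotes the Euclidean distance to the set ω. -/

import Mathlib

open MeasureTheory

/-- Partial derivative in time of a function of (time, space). -/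
noncomputable def pdt {n : ℕ} (u : ℝ → EuclideanSpace ℝ (Fin n) → ℝ) :
    ℝ → EuclideanSpace ℝ (Fin n) → ℝ := fun t x => deriv (fun s => u s x) t

/-- The Euclidean Laplacian of `f` at `x`, as the sum of the second derivatives
along the coordinate directions. -/
noncomputable def lap {n : ℕ} (f : EuclideanSpace ℝ (Fin n) → ℝ)
    (x : EuclideanSpace ℝ (Fin n)) : ℝ :=
  ∑ i, iteratedFDeriv ℝ 2 f x ![EuclideanSpace.single i 1, EuclideanSpace.single i 1]

/-!
Spherical means reduce the wave equation about a center `y ∈ ω` to a problem in time and radius: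
along the characteristics `t ± r = const`, the spherical means of the null derivatives of `u`
satisfy transport equations whose only coupling is a term bounded by a constant over `r`
(Darboux). They vanish for small `r`, because `u` vanishes on `[0, T] × ω`, and are opposite at
`t = 0`, because `u(0, ·) = 0`; a Gronwall argument in the triangle `t + r ≤ T` then gives zero.
Hence the initial velocity has mean zero over every sphere of center in `ω` and radius less
than `T`. Differentiating such means with respect to the center shows that this property is
preserved by multiplication by linear functions, so by Stone–Weierstrass by multiplication by all
continuous functions, in particular by the initial velocity itself.
-/

open Filter InnerProductSpace Metric Module Set Topology
open scoped Laplacian Pointwise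

section Calculus

variable {X : Type*} [TopologicalSpace X] [CompactSpace X] [MeasurableSpace X] [BorelSpace X]
  {μ : Measure X} [IsFiniteMeasure μ]

lemma integrable_of_continuous_of_compactSpace {f : X → ℝ} (hf : Continuous f) :
    Integrable f μ :=
  hf.integrable_of_hasCompactSupport (.of_compactSpace f)

lemma hasDerivAt_integral_of_continuousOn {g g' : ℝ → X → ℝ} {s : Set ℝ} (hs : IsOpen s)
    (hg : ContinuousOn g.uncurry (s ×ˢ univ)) (hg' : ContinuousOn g'.uncurry (s ×ˢ univ))
    (hd : ∀ t ∈ s, ∀ x, HasDerivAt (g · x) (g' t x) t) {t : ℝ} (ht : t ∈ s) :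
    HasDerivAt (fun t ↦ ∫ x, g t x ∂μ) (∫ x, g' t x ∂μ) t := by
  have slice {k : ℝ → X → ℝ} (hk : ContinuousOn k.uncurry (s ×ˢ univ)) {τ : ℝ} (hτ : τ ∈ s) :
      Continuous (k τ) :=
    hk.comp_continuous (by fun_prop : Continuous (Prod.mk τ)) fun x ↦ ⟨hτ, mem_univ x⟩
  obtain ⟨ε, hε, hεs⟩ := nhds_basis_closedBall.mem_iff.1 (hs.mem_nhds ht)
  obtain ⟨C, hC⟩ := ((isCompact_closedBall t ε).prod isCompact_univ).exists_bound_of_continuousOn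
    (hg'.mono (prod_mono hεs subset_rfl))
  refine (hasDerivAt_integral_of_dominated_loc_of_deriv_le (bound := fun _ ↦ C)
    (closedBall_mem_nhds t hε) ?_ (integrable_of_continuous_of_compactSpace (slice hg ht))
    (slice hg' ht).aestronglyMeasurable_of_compactSpace
    (.of_forall fun x τ hτ ↦ hC (τ, x) ⟨hτ, mem_univ x⟩) (integrable_const C)
    (.of_forall fun x τ hτ ↦ hd τ (hεs hτ) x)).2
  filter_upwards [hs.mem_nhds ht] with τ hτ
  exact (slice hg hτ).aestronglyMeasurable_of_compactSpace

end Calculus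

section Rotations

variable {E : Type*} [NormedAddCommGroup E] [InnerProductSpace ℝ E]

/-- The action of a linear isometry on the unit sphere. -/
def sphereMap (R : E ≃ₗᵢ[ℝ] E) (σ : sphere (0 : E) 1) : sphere (0 : E) 1 :=
  ⟨R σ, by simp⟩

lemma continuous_sphereMap (R : E ≃ₗᵢ[ℝ] E) : Continuous (sphereMap R) :=
  (R.continuous.comp continuous_subtype_val).subtype_mk _

lemma coe_image_sphereMap_preimage (R : E ≃ₗᵢ[ℝ] E) (s : Set (sphere (0 : E) 1)) :
    ((↑) '' (sphereMap R ⁻¹' s) : Set E) = R.symm '' ((↑) '' s) := by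
  rw [R.symm.image_eq_preimage_symm]
  ext x
  simp [sphereMap]

section Flow

variable [CompleteSpace E]

/-- The one-parameter group `θ ↦ exp (θ A)` of isometries generated by a skew-adjoint `A`. -/
noncomputable def rotationFlow {A : E →L[ℝ] E} (hA : A ∈ skewAdjoint (E →L[ℝ] E)) (θ : ℝ) :
    E ≃ₗᵢ[ℝ] E :=
  letI : NormedAlgebra ℚ (E →L[ℝ] E) := .restrictScalars ℚ ℝ _
  Unitary.linearIsometryEquiv
    ⟨NormedSpace.exp (θ • A), NormedSpace.exp_mem_unitary_of_mem_skewAdjoint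
      (skewAdjoint.smul_mem θ hA)⟩

lemma rotationFlow_apply {A : E →L[ℝ] E} (hA : A ∈ skewAdjoint (E →L[ℝ] E)) (θ : ℝ) (x : E) :
    rotationFlow hA θ x = NormedSpace.exp (θ • A) x := by
  rfl

lemma hasDerivAt_rotationFlow {A : E →L[ℝ] E} (hA : A ∈ skewAdjoint (E →L[ℝ] E)) (θ : ℝ) (x : E) :
    HasDerivAt (fun θ ↦ rotationFlow hA θ x) (rotationFlow hA θ (A x)) θ := by
  simpa [rotationFlow_apply] using
    (hasDerivAt_exp_smul_const A θ).clm_apply (hasDerivAt_const θ x)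

lemma continuous_rotationFlow {A : E →L[ℝ] E} (hA : A ∈ skewAdjoint (E →L[ℝ] E)) :
    Continuous fun p : ℝ × E ↦ rotationFlow hA p.1 p.2 := by
  have hexp : Continuous fun θ : ℝ ↦ NormedSpace.exp (θ • A) :=
    continuous_iff_continuousAt.2 fun θ ↦ (hasDerivAt_exp_smul_const A θ).continuousAt
  exact (hexp.comp continuous_fst).clm_apply continuous_snd

end Flow

variable [FiniteDimensional ℝ E] [MeasurableSpace E] [BorelSpace E]

lemma measurePreserving_sphereMap (R : E ≃ₗᵢ[ℝ] E) :
    MeasurePreserving (sphereMap R) (volume : Measure E).toSphere volume.toSphere := by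
  have hR : Measurable (sphereMap R) := (continuous_sphereMap R).measurable
  refine ⟨hR, Measure.ext fun s hs ↦ ?_⟩
  have hcone : Ioo (0 : ℝ) 1 • (R.symm '' ((↑) '' s)) =
      R.symm '' (Ioo (0 : ℝ) 1 • ((↑) '' s) : Set E) :=
    (image_image2_distrib_right fun r x ↦ R.symm.map_smul r x).symm
  rw [Measure.map_apply hR hs, Measure.toSphere_apply' _ hs, Measure.toSphere_apply' _ (hR hs),
    coe_image_sphereMap_preimage, hcone, R.symm.image_eq_preimage_symm, R.symm_symm]
  congr 1
  exact R.measurePreserving.measure_preimage_equiv (f := R.toMeasurableEquiv) _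

lemma integral_sphere_comp (R : E ≃ₗᵢ[ℝ] E) {g : E → ℝ} (hg : Continuous g) :
    ∫ σ : sphere (0 : E) 1, g (R σ) ∂volume.toSphere =
      ∫ σ : sphere (0 : E) 1, g σ ∂volume.toSphere := by
  have hmeas : AEStronglyMeasurable (fun σ : sphere (0 : E) 1 ↦ g σ)
      ((volume : Measure E).toSphere.map (sphereMap R)) :=
    (hg.comp continuous_subtype_val).aestronglyMeasurable_of_compactSpace
  rw [← (measurePreserving_sphereMap R).map_eq, integral_map
    (continuous_sphereMap R).aemeasurable hmeas, (measurePreserving_sphereMap R).map_eq]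
  rfl

lemma integral_sphere_fderiv_skewAdjoint {A : E →L[ℝ] E} (hA : A ∈ skewAdjoint (E →L[ℝ] E))
    {g : E → ℝ} (hg : ContDiff ℝ 1 g) :
    ∫ σ : sphere (0 : E) 1, fderiv ℝ g σ (A σ) ∂volume.toSphere = 0 := by
  have hflow {v : E → E} (hv : Continuous v) :
      Continuous fun p : ℝ × sphere (0 : E) 1 ↦ rotationFlow hA p.1 (v p.2) :=
    (continuous_rotationFlow hA).comp
      (continuous_fst.prodMk (hv.comp (continuous_subtype_val.comp continuous_snd)))
  have hderiv := hasDerivAt_integral_of_continuousOn (μ := (volume : Measure E).toSphere)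
    (g := fun θ σ ↦ g (rotationFlow hA θ σ))
    (g' := fun θ σ ↦ fderiv ℝ g (rotationFlow hA θ σ) (rotationFlow hA θ (A σ))) isOpen_univ
    (hg.continuous.comp (hflow continuous_id)).continuousOn
    (((hg.continuous_fderiv one_ne_zero).comp (hflow continuous_id)).clm_apply
      (hflow A.continuous)).continuousOn
    (fun θ _ σ ↦ (hg.differentiable one_ne_zero _).hasFDerivAt.comp_hasDerivAt θ
      (hasDerivAt_rotationFlow hA θ σ)) (mem_univ 0)
  simp only [integral_sphere_comp _ hg.continuous] at hderiv
  simpa [rotationFlow_apply, NormedSpace.exp_zero] using hderiv.unique (hasDerivAt_const _ _)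

end Rotations

section Darboux

variable {E : Type*} [NormedAddCommGroup E] [InnerProductSpace ℝ E]

/-- The generator `x ↦ ⟪a, x⟫ b - ⟪b, x⟫ a` of the rotations in the plane spanned by `a` and `b`. -/
noncomputable def rotationGenerator (a b : E) : E →L[ℝ] E := rankOne ℝ b a - rankOne ℝ a b

lemma rotationGenerator_apply (a b x : E) :
    rotationGenerator a b x = inner ℝ a x • b - inner ℝ b x • a := rfl

lemma rotationGenerator_mem_skewAdjoint [CompleteSpace E] (a b : E) :
    rotationGenerator a b ∈ skewAdjoint (E →L[ℝ] E) := by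
  simp [skewAdjoint.mem_iff, rotationGenerator, ContinuousLinearMap.star_eq_adjoint]

variable {ι : Type*} [Fintype ι] (b : OrthonormalBasis ι ℝ E)

lemma sum_rotationGenerator_rotationGenerator (x : E) :
    ∑ i, ∑ j, rotationGenerator (b i) (b j) (rotationGenerator (b i) (b j) x) =
      (-2 * ((Fintype.card ι : ℝ) - 1)) • x := by
  classical
  have hterm (i j : ι) : rotationGenerator (b i) (b j) (rotationGenerator (b i) (b j) x) =
      ((if i = j then inner ℝ (b i) x • b i else 0) - inner ℝ (b j) x • b j) -
        (inner ℝ (b i) x • b i - if i = j then inner ℝ (b i) x • b i else 0) := by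
    obtain rfl | hij := eq_or_ne i j
    · simp [rotationGenerator_apply]
    · simp [rotationGenerator_apply, inner_sub_right, inner_smul_right,
        orthonormal_iff_ite.1 b.orthonormal, hij, hij.symm]
  simp only [hterm, Finset.sum_sub_distrib, Finset.sum_ite_eq, Finset.mem_univ, if_true,
    b.sum_repr', Finset.sum_const, Finset.card_univ, ← Finset.smul_sum]
  rw [← Nat.cast_smul_eq_nsmul ℝ]
  module

lemma sum_bilin_rotationGenerator (B : E →L[ℝ] E →L[ℝ] ℝ) (x : E) :
    ∑ i, ∑ j, B (rotationGenerator (b i) (b j) x) (rotationGenerator (b i) (b j) x) =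
      2 * (‖x‖ ^ 2 * ∑ i, B (b i) (b i) - B x x) := by
  have hx : ∑ i, ∑ j, inner ℝ (b i) x * inner ℝ (b j) x * B (b i) (b j) = B x x := by
    conv_rhs => rw [← b.sum_repr' x]
    simp only [map_sum, map_smul, sum_apply, smul_apply, smul_eq_mul, Finset.mul_sum]
    rw [Finset.sum_comm]
    exact Finset.sum_congr rfl fun i _ ↦ Finset.sum_congr rfl fun j _ ↦ by ring
  have htrace : ∑ i, ∑ j, inner ℝ (b i) x ^ 2 * B (b j) (b j) =
      ‖x‖ ^ 2 * ∑ i, B (b i) (b i) := by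
    rw [← b.sum_sq_inner_right x, Finset.sum_mul_sum]
  calc
    _ = ∑ i, ∑ j, (inner ℝ (b i) x ^ 2 * B (b j) (b j) + inner ℝ (b j) x ^ 2 * B (b i) (b i)
        - inner ℝ (b i) x * inner ℝ (b j) x * B (b i) (b j)
        - inner ℝ (b j) x * inner ℝ (b i) x * B (b j) (b i)) := by
      refine Finset.sum_congr rfl fun i _ ↦ Finset.sum_congr rfl fun j _ ↦ ?_
      simp only [rotationGenerator_apply, map_sub, map_smul, sub_apply, smul_apply, smul_eq_mul]
      ring
    _ = _ := by
      simp only [Finset.sum_sub_distrib, Finset.sum_add_distrib]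
      rw [Finset.sum_comm (f := fun i j ↦ inner ℝ (b j) x ^ 2 * B (b i) (b i)),
        Finset.sum_comm (f := fun i j ↦ inner ℝ (b j) x * inner ℝ (b i) x * B (b j) (b i)),
        htrace, hx]
      ring

variable [FiniteDimensional ℝ E]

lemma laplacian_eq_sum_fderiv_fderiv (f : E → ℝ) (x : E) :
    Δ f x = ∑ i, fderiv ℝ (fderiv ℝ f) x (b i) (b i) := by
  simp [laplacian_eq_iteratedFDeriv_orthonormalBasis f b, iteratedFDeriv_two_apply]

lemma sum_rotationGenerator_derivatives (f : E → ℝ) (z : E) (r : ℝ) {σ : E} (hσ : ‖σ‖ = 1) :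
    ∑ i, ∑ j, (r * fderiv ℝ (fderiv ℝ f) z (rotationGenerator (b i) (b j) σ)
        (rotationGenerator (b i) (b j) σ) +
      fderiv ℝ f z (rotationGenerator (b i) (b j) (rotationGenerator (b i) (b j) σ))) =
      -2 * (r * (fderiv ℝ (fderiv ℝ f) z σ σ - Δ f z) +
        ((Fintype.card ι : ℝ) - 1) * fderiv ℝ f z σ) := by
  simp only [Finset.sum_add_distrib, ← Finset.mul_sum, ← map_sum]
  rw [sum_bilin_rotationGenerator, sum_rotationGenerator_rotationGenerator, hσ,
    ← laplacian_eq_sum_fderiv_fderiv]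
  simp only [map_smul, smul_eq_mul]
  ring

variable [MeasurableSpace E] [BorelSpace E] {f : E → ℝ}

lemma integral_sphere_second_derivative_skewAdjoint (hf : ContDiff ℝ 2 f) (y : E) (r : ℝ)
    {A : E →L[ℝ] E} (hA : A ∈ skewAdjoint (E →L[ℝ] E)) :
    ∫ σ : sphere (0 : E) 1, (r * fderiv ℝ (fderiv ℝ f) (y + r • (σ : E)) (A σ) (A σ) +
      fderiv ℝ f (y + r • (σ : E)) (A (A σ))) ∂volume.toSphere = 0 := by
  have hf' : ContDiff ℝ 1 (fderiv ℝ f) := hf.fderiv_right (by norm_num)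
  have hderiv (σ : E) : fderiv ℝ (fun x ↦ fderiv ℝ f (y + r • x) (A x)) σ (A σ) =
      r * fderiv ℝ (fderiv ℝ f) (y + r • σ) (A σ) (A σ) + fderiv ℝ f (y + r • σ) (A (A σ)) := by
    have hscale : HasFDerivAt (fun x ↦ y + r • x) (r • ContinuousLinearMap.id ℝ E) σ :=
      ((hasFDerivAt_id σ).const_smul r).const_add y
    have := ((hf'.differentiable one_ne_zero (y + r • σ)).hasFDerivAt.comp σ hscale).clm_apply
      A.hasFDerivAt
    rw [HasFDerivAt.fderiv (f := fun x ↦ fderiv ℝ f (y + r • x) (A x)) this]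
    simp [add_comm]
  simp only [← hderiv]
  exact integral_sphere_fderiv_skewAdjoint hA
    ((hf'.comp (by fun_prop : ContDiff ℝ 1 fun x ↦ y + r • x)).clm_apply A.contDiff)

/-- The Darboux identity: the first-order term is the curvature of the orbits of the rotations,
over which the second derivatives are averaged. -/
lemma mul_integral_sphere_fderiv_fderiv_sub_laplacian (hf : ContDiff ℝ 2 f) (y : E) (r : ℝ) :
    r * ∫ σ : sphere (0 : E) 1, (fderiv ℝ (fderiv ℝ f) (y + r • (σ : E)) σ σ -
        Δ f (y + r • (σ : E))) ∂volume.toSphere =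
      -((finrank ℝ E : ℝ) - 1) *
        ∫ σ : sphere (0 : E) 1, fderiv ℝ f (y + r • (σ : E)) σ ∂volume.toSphere := by
  have hf' : Continuous (fderiv ℝ f) := hf.continuous_fderiv two_ne_zero
  have hΔ : Continuous (Δ f) := by
    rw [funext (laplacian_eq_sum_fderiv_fderiv (stdOrthonormalBasis ℝ E) f)]
    fun_prop
  set b := stdOrthonormalBasis ℝ E
  have hint (i j) : Integrable (fun σ : sphere (0 : E) 1 ↦
      r * fderiv ℝ (fderiv ℝ f) (y + r • (σ : E)) (rotationGenerator (b i) (b j) σ)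
        (rotationGenerator (b i) (b j) σ) + fderiv ℝ f (y + r • (σ : E))
        (rotationGenerator (b i) (b j) (rotationGenerator (b i) (b j) σ))) volume.toSphere :=
    integrable_of_continuous_of_compactSpace (by fun_prop)
  have hsum := Finset.sum_eq_zero fun i (_ : i ∈ Finset.univ) ↦
    Finset.sum_eq_zero fun j (_ : j ∈ Finset.univ) ↦
      integral_sphere_second_derivative_skewAdjoint hf y r
        (rotationGenerator_mem_skewAdjoint (b i) (b j))
  simp only [← integral_finsetSum _ fun j _ ↦ hint _ j] at hsum
  rw [← integral_finsetSum _ fun i _ ↦ integrable_finsetSum _ fun j _ ↦ hint i j] at hsum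
  simp only [sum_rotationGenerator_derivatives b f _ r (norm_eq_of_mem_sphere _),
    Fintype.card_fin] at hsum
  rw [integral_const_mul, integral_add (integrable_of_continuous_of_compactSpace (by fun_prop))
    (integrable_of_continuous_of_compactSpace (by fun_prop)), integral_const_mul,
    integral_const_mul] at hsum
  linarith

end Darboux

section Polar

variable {E : Type*} [NormedAddCommGroup E] [NormedSpace ℝ E] [FiniteDimensional ℝ E] [Nontrivial E]
  [MeasurableSpace E] [BorelSpace E] {F : Type*} [NormedAddCommGroup F] [NormedSpace ℝ F]

lemma integral_eq_integral_volumeIoiPow_integral_toSphere (μ : Measure E) [μ.IsAddHaarMeasure]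
    {k : E → F} (hk : Integrable k μ) :
    ∫ x, k x ∂μ = ∫ r : Ioi (0 : ℝ), ∫ σ : sphere (0 : E) 1, k ((r : ℝ) • (σ : E)) ∂μ.toSphere
      ∂Measure.volumeIoiPow (finrank ℝ E - 1) := by
  have hpolar := μ.measurePreserving_homeomorphUnitSphereProd
  have hemb := (homeomorphUnitSphereProd E).measurableEmbedding
  have h0 : MeasurableSet ({0}ᶜ : Set E) := (measurableSet_singleton 0).compl
  let k' : sphere (0 : E) 1 × Ioi (0 : ℝ) → F := fun p ↦ k ((p.2 : ℝ) • (p.1 : E))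
  have hk' (x : ({0}ᶜ : Set E)) : k' (homeomorphUnitSphereProd E x) = k x := by
    simp [k', smul_smul, norm_ne_zero_iff.2 x.2]
  have hint : Integrable k' (μ.toSphere.prod (.volumeIoiPow (finrank ℝ E - 1))) := by
    rw [← hpolar.integrable_comp_emb hemb]
    refine ((integrableOn_iff_comap_subtypeVal h0).1 hk.integrableOn).congr
      (.of_forall fun x ↦ (hk' x).symm)
  calc
    ∫ x, k x ∂μ = ∫ x : ({0}ᶜ : Set E), k x ∂μ.comap (↑) := by
      rw [integral_subtype_comap h0 k, restrict_compl_singleton]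
    _ = ∫ p, k' p ∂μ.toSphere.prod (.volumeIoiPow (finrank ℝ E - 1)) := by
      simp only [← hpolar.integral_comp hemb, hk']
    _ = _ := integral_prod_symm k' hint

end Polar

section RadialMoments

lemma exists_contDiff_hasDerivAt_of_eqOn_Ici {ψ : ℝ → ℝ} (hψ : Continuous ψ) {c : ℝ}
    (hψc : EqOn ψ 0 (Ici c)) :
    ∃ φ : ℝ → ℝ, ContDiff ℝ 1 φ ∧ (∀ s, HasDerivAt φ (ψ s) s) ∧ EqOn φ 0 (Ici c) := by
  have hderiv (s : ℝ) : HasDerivAt (fun s ↦ ∫ τ in c..s, ψ τ) (ψ s) s :=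
    intervalIntegral.integral_hasDerivAt_right (hψ.intervalIntegrable _ _)
      (hψ.stronglyMeasurableAtFilter _ _) hψ.continuousAt
  refine ⟨fun s ↦ ∫ τ in c..s, ψ τ, ?_, hderiv, fun s hs ↦ ?_⟩
  · rw [contDiff_one_iff_deriv, funext fun s ↦ (hderiv s).deriv]
    exact ⟨fun s ↦ (hderiv s).differentiableAt, hψ⟩
  · refine intervalIntegral.integral_zero_ae (.of_forall fun τ hτ ↦ ?_)
    rw [uIoc_of_le hs] at hτ
    exact hψc hτ.1.le

variable {E : Type*} [NormedAddCommGroup E]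

lemma hasCompactSupport_mul_radial [ProperSpace E] (f : E → ℝ) (y : E) {R : ℝ} (hR : 0 ≤ R)
    {ψ : ℝ → ℝ} (hψR : EqOn ψ 0 (Ici (R ^ 2))) :
    HasCompactSupport fun z ↦ f z * ψ (‖z - y‖ ^ 2) := by
  refine .intro (isCompact_closedBall y R) fun z hz ↦ ?_
  rw [mem_closedBall, not_le, dist_eq_norm] at hz
  rw [hψR (pow_le_pow_left₀ hR hz.le 2), Pi.zero_apply, mul_zero]

variable [InnerProductSpace ℝ E]

lemma fderiv_comp_norm_sq {φ : ℝ → ℝ} {φ' : ℝ} {x : E} (hφ : HasDerivAt φ φ' (‖x‖ ^ 2)) (v : E) :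
    fderiv ℝ (fun x ↦ φ (‖x‖ ^ 2)) x v = 2 * (φ' * inner ℝ x v) := by
  have h := hφ.comp_hasFDerivAt x (hasStrictFDerivAt_norm_sq x).hasFDerivAt
  rw [HasFDerivAt.fderiv (f := fun x ↦ φ (‖x‖ ^ 2)) h]
  simp
  ring

variable [FiniteDimensional ℝ E] [MeasurableSpace E] [BorelSpace E]

lemma integrable_mul_radial {f : E → ℝ} (hf : Continuous f) (y : E) {R : ℝ} (hR : 0 ≤ R)
    {ψ : ℝ → ℝ} (hψ : Continuous ψ) (hψR : EqOn ψ 0 (Ici (R ^ 2))) :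
    Integrable fun z ↦ f z * ψ (‖z - y‖ ^ 2) :=
  Continuous.integrable_of_hasCompactSupport (by fun_prop)
    (hasCompactSupport_mul_radial f y hR hψR)

/-- All integrals of `f` against weights which are radial about a point of `ω` and supported in
a ball of radius less than `T` vanish. Weights are written as functions of the squared distance
so that they are as smooth in space as in the radial variable. -/
def HasVanishingRadialMoments (ω : Set E) (T : ℝ) (f : E → ℝ) : Prop :=
  ∀ y ∈ ω, ∀ R ∈ Ioo 0 T, ∀ ψ : ℝ → ℝ, Continuous ψ → EqOn ψ 0 (Ici (R ^ 2)) →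
    ∫ z, f z * ψ (‖z - y‖ ^ 2) = 0

lemma hasVanishingRadialMoments_of_integral_sphere_eq_zero [Nontrivial E] {ω : Set E} {T : ℝ}
    {f : E → ℝ} (hf : Continuous f)
    (hmean : ∀ y ∈ ω, ∀ r ∈ Ioo 0 T,
      ∫ σ : sphere (0 : E) 1, f (y + r • (σ : E)) ∂volume.toSphere = 0) :
    HasVanishingRadialMoments ω T f := by
  intro y hy R hR ψ hψ hψR
  have hint : Integrable fun x ↦ f (y + x) * ψ (‖x‖ ^ 2) := by
    simpa using integrable_mul_radial (f := fun x ↦ f (y + x)) (by fun_prop) 0 hR.1.le hψ hψR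
  have htranslate : ∫ z, f z * ψ (‖z - y‖ ^ 2) = ∫ x, f (y + x) * ψ (‖x‖ ^ 2) := by
    rw [← integral_add_left_eq_self _ y]
    simp
  rw [htranslate, integral_eq_integral_volumeIoiPow_integral_toSphere volume hint]
  refine integral_eq_zero_of_ae (.of_forall fun r ↦ ?_)
  have hr : (0 : ℝ) < r := r.2
  simp only [norm_smul, norm_eq_of_mem_sphere, mul_one, Real.norm_eq_abs, sq_abs,
    Pi.zero_apply]
  rw [integral_mul_const]
  obtain hrR | hRr := lt_or_ge (r : ℝ) R
  · rw [hmean y hy r ⟨hr, hrR.trans hR.2⟩, zero_mul]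
  · rw [hψR (pow_le_pow_left₀ hR.1.le hRr 2), Pi.zero_apply, mul_zero]

open scoped Convolution in
lemma integral_mul_fderiv_eq_zero_of_eventually {f g : E → ℝ} (hf : Continuous f)
    (hg : ContDiff ℝ 1 g) (hgs : HasCompactSupport g) {y : E}
    (hzero : ∀ᶠ y' in 𝓝 y, ∫ z, f z * g (y' - z) = 0) (v : E) :
    ∫ z, f z * fderiv ℝ g (y - z) v = 0 := by
  have hf' := hf.locallyIntegrable (μ := volume)
  have hconv := hgs.hasFDerivAt_convolution_right (ContinuousLinearMap.mul ℝ ℝ) hf' hg y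
  have hderiv := (hconv.congr_of_eventuallyEq (f₁ := fun _ ↦ (0 : ℝ))
    (hzero.mono fun y' hy' ↦ hy'.symm)).unique (hasFDerivAt_const 0 y)
  have := DFunLike.congr_fun hderiv v
  rwa [convolution_precompR_apply _ hf' (hgs.fderiv ℝ) (hg.continuous_fderiv one_ne_zero)] at this

namespace HasVanishingRadialMoments

variable {ω : Set E} {T : ℝ} {f : E → ℝ}

/-- Differentiating the moments with respect to their center produces a linear factor. -/
lemma inner_mul (hω : IsOpen ω) (hf : Continuous f) (h : HasVanishingRadialMoments ω T f) (v : E) :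
    HasVanishingRadialMoments ω T fun z ↦ inner ℝ z v * f z := by
  intro y hy R hR ψ hψ hψR
  obtain ⟨φ, hφ, hφψ, hφR⟩ := exists_contDiff_hasDerivAt_of_eqOn_Ici hψ hψR
  have hgs : HasCompactSupport fun x : E ↦ φ (‖x‖ ^ 2) := by
    simpa using hasCompactSupport_mul_radial (fun _ ↦ (1 : ℝ)) (0 : E) hR.1.le hφR
  have hzero : ∀ᶠ y' in 𝓝 y, ∫ z, f z * φ (‖y' - z‖ ^ 2) = 0 := by
    filter_upwards [hω.mem_nhds hy] with y' hy'
    simpa only [norm_sub_rev] using h y' hy' R hR φ hφ.continuous hφR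
  have hgrad := integral_mul_fderiv_eq_zero_of_eventually
    (g := fun x ↦ φ (‖x‖ ^ 2)) hf (hφ.comp (contDiff_norm_sq ℝ)) hgs hzero v
  simp only [fderiv_comp_norm_sq (hφψ _)] at hgrad
  have hsplit (z : E) : inner ℝ z v * f z * ψ (‖z - y‖ ^ 2) =
      inner ℝ y v * (f z * ψ (‖z - y‖ ^ 2)) -
        1 / 2 * (f z * (2 * (ψ (‖y - z‖ ^ 2) * inner ℝ (y - z) v))) := by
    rw [norm_sub_rev, inner_sub_left]
    ring
  have hint : Integrable fun z ↦ f z * (2 * (ψ (‖y - z‖ ^ 2) * inner ℝ (y - z) v)) :=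
    (integrable_mul_radial (f := fun z ↦ 2 * (f z * inner ℝ (y - z) v)) (by fun_prop) y hR.1.le
      hψ hψR).congr (.of_forall fun z ↦ by simp only [norm_sub_rev z]; ring)
  simp only [hsplit]
  rw [integral_sub ((integrable_mul_radial hf y hR.1.le hψ hψR).const_mul _) (hint.const_mul _),
    integral_const_mul, integral_const_mul, hgrad, h y hy R hR ψ hψ hψR]
  simp

variable (ω T) in
/-- The continuous functions multiplication by which preserves the class of continuous functions
with vanishing radial moments. -/
def multipliers : Subalgebra ℝ C(E, ℝ) where
  carrier := {p | ∀ f : E → ℝ, Continuous f → HasVanishingRadialMoments ω T f →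
    HasVanishingRadialMoments ω T fun z ↦ p z * f z}
  mul_mem' {p q} hp hq f hf h := by
    simpa only [ContinuousMap.mul_apply, mul_assoc] using
      hp _ (q.continuous.fun_mul hf) (hq f hf h)
  add_mem' {p q} hp hq f hf h y hy R hR ψ hψ hψR := by
    simp only [ContinuousMap.add_apply, add_mul]
    rw [integral_add (integrable_mul_radial (p.continuous.fun_mul hf) y hR.1.le hψ hψR)
      (integrable_mul_radial (q.continuous.fun_mul hf) y hR.1.le hψ hψR),
      hp f hf h y hy R hR ψ hψ hψR, hq f hf h y hy R hR ψ hψ hψR, add_zero]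
  algebraMap_mem' c f _ h y hy R hR ψ hψ hψR := by
    have hc (z : E) : algebraMap ℝ C(E, ℝ) c z = c := rfl
    simp only [hc, mul_assoc]
    rw [integral_const_mul, h y hy R hR ψ hψ hψR, mul_zero]

lemma separatesPoints_multipliers (hω : IsOpen ω) : (multipliers ω T).SeparatesPoints := by
  intro a b hab
  refine ⟨fun z ↦ inner ℝ z (a - b), ⟨⟨fun z ↦ inner ℝ z (a - b), by fun_prop⟩,
    fun f hf h ↦ h.inner_mul hω hf (a - b), rfl⟩, ?_⟩
  rw [← sub_ne_zero, ← inner_sub_left]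
  exact inner_self_ne_zero.2 (sub_ne_zero.2 hab)

/-- By Stone–Weierstrass, `f` is a limit of multipliers. -/
lemma integral_mul_self_eq_zero (hω : IsOpen ω) (hf : Continuous f)
    (h : HasVanishingRadialMoments ω T f) {y : E} (hy : y ∈ ω) {R : ℝ} (hR : R ∈ Ioo 0 T)
    {ψ : ℝ → ℝ} (hψ : Continuous ψ) (hψR : EqOn ψ 0 (Ici (R ^ 2))) :
    ∫ z, f z * f z * ψ (‖z - y‖ ^ 2) = 0 := by
  have hint {k : E → ℝ} (hk : Continuous k) := integrable_mul_radial hk y hR.1.le hψ hψR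
  set I := ∫ z, ‖f z * ψ (‖z - y‖ ^ 2)‖
  have hI : 0 ≤ I := integral_nonneg fun z ↦ norm_nonneg _
  have happrox : ∀ δ > 0, ‖∫ z, f z * f z * ψ (‖z - y‖ ^ 2)‖ ≤ δ * I := by
    intro δ hδ
    obtain ⟨p, hp, hpf⟩ :=
      ContinuousMap.exists_mem_subalgebra_near_continuous_of_isCompact_of_separatesPoints
        (separatesPoints_multipliers (T := T) hω) ⟨f, hf⟩ (isCompact_closedBall y R) hδ
    have hsub : ∫ z, f z * f z * ψ (‖z - y‖ ^ 2) =
        ∫ z, (f z * f z * ψ (‖z - y‖ ^ 2) - p z * f z * ψ (‖z - y‖ ^ 2)) := by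
      rw [integral_sub (hint (hf.fun_mul hf)) (hint (p.continuous.fun_mul hf)),
        hp f hf h y hy R hR ψ hψ hψR, sub_zero]
    rw [hsub, ← integral_const_mul]
    refine norm_integral_le_of_norm_le ((hint hf).norm.const_mul δ) (.of_forall fun z ↦ ?_)
    by_cases hz : z ∈ closedBall y R
    · rw [← sub_mul, ← sub_mul, mul_assoc, norm_mul, norm_sub_rev]
      exact mul_le_mul_of_nonneg_right (hpf z hz).le (norm_nonneg _)
    · rw [mem_closedBall, not_le, dist_eq_norm] at hz
      simp [hψR (pow_le_pow_left₀ hR.1.le hz.le 2)]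
  refine norm_le_zero_iff.1 (le_of_forall_pos_le_add fun ε hε ↦ ?_)
  calc
    _ ≤ ε / (I + 1) * I := happrox _ (by positivity)
    _ = ε * (I / (I + 1)) := by ring
    _ ≤ 0 + ε := by
      rw [zero_add]
      exact mul_le_of_le_one_right hε.le (div_le_one_of_le₀ (by linarith) (by linarith))

theorem eqOn_zero_thickening (hω : IsOpen ω) (hf : Continuous f)
    (h : HasVanishingRadialMoments ω T f) : EqOn f 0 (thickening T ω) := by
  intro x hx
  obtain ⟨y, hy, hxy⟩ := mem_thickening_iff.1 hx
  obtain ⟨R, hxR, hRT⟩ := exists_between hxy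
  have hR : 0 < R := dist_nonneg.trans_lt hxR
  set ψ : ℝ → ℝ := fun s ↦ max (R ^ 2 - s) 0
  have hψR : EqOn ψ 0 (Ici (R ^ 2)) := fun s hs ↦ max_eq_right (sub_nonpos.2 hs)
  have hψx : 0 < ψ (‖x - y‖ ^ 2) := by
    rw [dist_eq_norm] at hxR
    exact lt_max_of_lt_left (sub_pos.2 (by gcongr))
  by_contra hfx
  refine (Continuous.integral_pos_of_hasCompactSupport_nonneg_nonzero (μ := volume) (x := x)
    (f := fun z ↦ f z * f z * ψ (‖z - y‖ ^ 2)) (by fun_prop)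
    (hasCompactSupport_mul_radial (fun z ↦ f z * f z) y hR.le hψR)
    (fun z ↦ mul_nonneg (mul_self_nonneg _) (le_max_right _ _))
    (mul_ne_zero (mul_ne_zero hfx hfx) hψx.ne')).ne' ?_
  exact h.integral_mul_self_eq_zero hω hf hy ⟨hR, hRT⟩ (by fun_prop) hψR

end HasVanishingRadialMoments

end RadialMoments

section Characteristics

variable {F : Type*} [NormedAddCommGroup F] [NormedSpace ℝ F]

lemma norm_le_add_mul_exp_sub_exp {g : ℝ → F} {a b A κ : ℝ} (hab : a ≤ b)
    (hg : ContinuousOn g (Icc a b))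
    (hg' : ∀ ρ ∈ Ioo a b, ∃ d, HasDerivAt g d ρ ∧ ‖d‖ ≤ A * (Real.exp (κ * ρ) * κ)) :
    ‖g b‖ ≤ ‖g a‖ + A * (Real.exp (κ * b) - Real.exp (κ * a)) := by
  have hexp (ρ : ℝ) : HasDerivAt (fun ρ ↦ A * Real.exp (κ * ρ)) (A * (Real.exp (κ * ρ) * κ)) ρ := by
    simpa using (((hasDerivAt_id ρ).const_mul κ).exp).const_mul A
  have hint : IntervalIntegrable (fun ρ ↦ A * (Real.exp (κ * ρ) * κ)) volume a b :=
    Continuous.intervalIntegrable (by fun_prop) a b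
  have hle : ‖g b - g a‖ ≤ ∫ ρ in a..b, A * (Real.exp (κ * ρ) * κ) :=
    norm_sub_le_integral_of_norm_deriv_le_of_le hab hg
      (fun ρ hρ ↦ (hg' ρ hρ).choose_spec.1.differentiableAt.differentiableWithinAt)
      (.of_forall fun ρ hρ ↦ by
        obtain ⟨d, hd, hd_le⟩ := hg' ρ hρ
        rwa [hd.deriv]) hint
  rw [intervalIntegral.integral_eq_sub_of_hasDerivAt (fun ρ _ ↦ hexp ρ) hint] at hle
  linarith [norm_le_norm_add_norm_sub (g a) (g b), norm_sub_rev (g a) (g b)]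

/-- The points `(t, r)` with `t ≥ 0` and `r ≥ ε` on or below the characteristic `t + r = T`. -/
def characteristicTriangle (ε T : ℝ) : Set (ℝ × ℝ) := {p | 0 ≤ p.1 ∧ ε ≤ p.2 ∧ p.1 + p.2 ≤ T}

lemma isCompact_characteristicTriangle (ε T : ℝ) : IsCompact (characteristicTriangle ε T) := by
  refine (isCompact_Icc (a := (0, ε)) (b := (T - ε, T))).of_isClosed_subset ?_ ?_
  · exact (isClosed_le continuous_const continuous_fst).inter
      ((isClosed_le continuous_const continuous_snd).inter
        (isClosed_le (continuous_fst.add continuous_snd) continuous_const))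
  · rintro ⟨t, r⟩ ⟨ht, hr, htr⟩
    simp only [mem_Icc, Prod.mk_le_mk]
    exact ⟨⟨ht, hr⟩, by linarith, by linarith⟩

/-- Functions `P` and `Q` of time `t` and radius `r` such that the growth of `P` along
`t + r = const` and of `Q` along `t - r = const` is controlled linearly, and which vanish at
`r = ε` and are coupled at `t = 0` as the spherical means of the null derivatives of a wave
with vanishing initial position are. -/
structure IsCharacteristicSystem (P Q : ℝ × ℝ → F) (ε T c : ℝ) : Prop where
  continuousOn_left : ContinuousOn P (characteristicTriangle ε T)
  continuousOn_right : ContinuousOn Q (characteristicTriangle ε T)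
  left_boundary : ∀ t, (t, ε) ∈ characteristicTriangle ε T → P (t, ε) = 0
  right_boundary : ∀ t, (t, ε) ∈ characteristicTriangle ε T → Q (t, ε) = 0
  norm_right_initial_le : ∀ r, (0, r) ∈ characteristicTriangle ε T → ‖Q (0, r)‖ ≤ ‖P (0, r)‖
  exists_hasDerivAt_left : ∀ t r, 0 < t → ε < r → t + r ≤ T →
    ∃ d, HasDerivAt (fun ρ ↦ P (t + r - ρ, ρ)) d r ∧ ‖d‖ ≤ c * (‖P (t, r)‖ + ‖Q (t, r)‖)
  exists_hasDerivAt_right : ∀ t r, 0 < t → ε < r → t + r ≤ T →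
    ∃ d, HasDerivAt (fun ρ ↦ Q (t - r + ρ, ρ)) d r ∧ ‖d‖ ≤ c * (‖P (t, r)‖ + ‖Q (t, r)‖)

namespace IsCharacteristicSystem

variable {P Q : ℝ × ℝ → F} {ε T c A : ℝ}

omit [NormedSpace ℝ F] in
lemma mul_norm_add_norm_le (hc : 0 ≤ c) {p : ℝ × ℝ}
    (hPQ : max ‖P p‖ ‖Q p‖ ≤ 2 * A * Real.exp (4 * c * p.2)) :
    c * (‖P p‖ + ‖Q p‖) ≤ A * (Real.exp (4 * c * p.2) * (4 * c)) := by
  obtain ⟨hP, hQ⟩ := max_le_iff.1 hPQ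
  calc
    _ ≤ c * (2 * A * Real.exp (4 * c * p.2) + 2 * A * Real.exp (4 * c * p.2)) := by gcongr
    _ = _ := by ring

lemma norm_left_le_half (h : IsCharacteristicSystem P Q ε T c) (hc : 0 ≤ c) (hA : 0 ≤ A)
    (hPQ : ∀ p ∈ characteristicTriangle ε T, max ‖P p‖ ‖Q p‖ ≤ 2 * A * Real.exp (4 * c * p.2))
    {t r : ℝ} (hp : (t, r) ∈ characteristicTriangle ε T) :
    ‖P (t, r)‖ ≤ A * Real.exp (4 * c * r) := by
  obtain ⟨ht, hr, htr⟩ : 0 ≤ t ∧ ε ≤ r ∧ t + r ≤ T := hp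
  have hmem {ρ : ℝ} (hρ : ρ ∈ Icc ε r) : (t + r - ρ, ρ) ∈ characteristicTriangle ε T :=
    ⟨by linarith [hρ.2], hρ.1, by linarith⟩
  have hgrow := norm_le_add_mul_exp_sub_exp (g := fun ρ ↦ P (t + r - ρ, ρ)) (A := A)
    (κ := 4 * c) hr (h.continuousOn_left.comp (by fun_prop) fun ρ hρ ↦ hmem hρ) fun ρ hρ ↦ by
      obtain ⟨d, hd, hd_le⟩ :=
        h.exists_hasDerivAt_left (t + r - ρ) ρ (by linarith [hρ.2]) hρ.1 (by linarith)
      exact ⟨d, by simpa using hd,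
        hd_le.trans (mul_norm_add_norm_le hc (hPQ _ (hmem (Ioo_subset_Icc_self hρ))))⟩
  simp only [add_sub_cancel_right, h.left_boundary _ (hmem (left_mem_Icc.2 hr)), norm_zero] at hgrow
  have := mul_nonneg hA (Real.exp_pos (4 * c * ε)).le
  linarith

lemma norm_right_le_half (h : IsCharacteristicSystem P Q ε T c) (hc : 0 ≤ c) (hA : 0 ≤ A)
    (hPQ : ∀ p ∈ characteristicTriangle ε T, max ‖P p‖ ‖Q p‖ ≤ 2 * A * Real.exp (4 * c * p.2))
    {t r : ℝ} (hp : (t, r) ∈ characteristicTriangle ε T) :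
    ‖Q (t, r)‖ ≤ A * Real.exp (4 * c * r) := by
  obtain ⟨ht, hr, htr⟩ : 0 ≤ t ∧ ε ≤ r ∧ t + r ≤ T := hp
  set r₀ := max ε (r - t) with hr₀
  have hr₀r : r₀ ≤ r := max_le hr (by linarith)
  have hmem {ρ : ℝ} (hρ : ρ ∈ Icc r₀ r) : (t - r + ρ, ρ) ∈ characteristicTriangle ε T :=
    ⟨by linarith [hρ.1, le_max_right ε (r - t)], (le_max_left _ _).trans hρ.1, by linarith [hρ.2]⟩
  have hstart : ‖Q (t - r + r₀, r₀)‖ ≤ A * Real.exp (4 * c * r₀) := by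
    have hmem₀ := hmem (left_mem_Icc.2 hr₀r)
    obtain hlt | hle := le_total (r - t) ε
    · rw [hr₀, max_eq_left hlt] at hmem₀ ⊢
      rw [h.right_boundary _ hmem₀, norm_zero]
      positivity
    · rw [hr₀, max_eq_right hle, sub_add_sub_cancel, sub_self] at hmem₀ ⊢
      exact (h.norm_right_initial_le _ hmem₀).trans (h.norm_left_le_half hc hA hPQ hmem₀)
  have hgrow := norm_le_add_mul_exp_sub_exp (g := fun ρ ↦ Q (t - r + ρ, ρ)) (A := A)
    (κ := 4 * c) hr₀r (h.continuousOn_right.comp (by fun_prop) fun ρ hρ ↦ hmem hρ) fun ρ hρ ↦ by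
      obtain ⟨d, hd, hd_le⟩ := h.exists_hasDerivAt_right (t - r + ρ) ρ
        (by linarith [hρ.1, le_max_right ε (r - t)]) ((le_max_left _ _).trans_lt hρ.1)
        (by linarith [hρ.2])
      exact ⟨d, by simpa using hd,
        hd_le.trans (mul_norm_add_norm_le hc (hPQ _ (hmem (Ioo_subset_Icc_self hρ))))⟩
  simp only [sub_add_cancel] at hgrow
  linarith

theorem eq_zero (h : IsCharacteristicSystem P Q ε T c) (hc : 0 ≤ c) {p : ℝ × ℝ}
    (hp : p ∈ characteristicTriangle ε T) : P p = 0 ∧ Q p = 0 := by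
  obtain ⟨q, hq, hmax⟩ := (isCompact_characteristicTriangle ε T).exists_isMaxOn ⟨p, hp⟩
    (f := fun p ↦ max ‖P p‖ ‖Q p‖ / Real.exp (4 * c * p.2))
    ((h.continuousOn_left.norm.sup h.continuousOn_right.norm).div (by fun_prop)
      fun p _ ↦ (Real.exp_pos _).ne')
  set M := max ‖P q‖ ‖Q q‖ / Real.exp (4 * c * q.2)
  have hM0 : 0 ≤ M := by positivity
  have hbound : ∀ p ∈ characteristicTriangle ε T,
      max ‖P p‖ ‖Q p‖ ≤ 2 * (M / 2) * Real.exp (4 * c * p.2) := fun p hp ↦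
    ((div_le_iff₀ (Real.exp_pos _)).1 (hmax hp)).trans_eq (by ring)
  have hhalf : M ≤ M / 2 := (div_le_iff₀ (Real.exp_pos _)).2 <|
    max_le (h.norm_left_le_half hc (by positivity) hbound hq)
      (h.norm_right_le_half hc (by positivity) hbound hq)
  have hzero := hbound p hp
  rw [show M = 0 by linarith, zero_div, mul_zero, zero_mul, max_le_iff] at hzero
  exact ⟨norm_le_zero_iff.1 hzero.1, norm_le_zero_iff.1 hzero.2⟩

end IsCharacteristicSystem

end Characteristics

section SpaceTime

variable {E F : Type*} [NormedAddCommGroup E] [NormedAddCommGroup F] [NormedSpace ℝ F]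

section Slices

variable [NormedSpace ℝ E] {u : ℝ → E → F} {t : ℝ} {x : E}

lemma hasDerivAt_of_differentiableAt_uncurry (h : DifferentiableAt ℝ u.uncurry (t, x)) :
    HasDerivAt (u · x) (fderiv ℝ u.uncurry (t, x) (1, 0)) t :=
  HasFDerivAt.comp_hasDerivAt (f := fun s ↦ (s, x)) t h.hasFDerivAt
    ((hasDerivAt_id t).prodMk (hasDerivAt_const t x))

lemma fderiv_of_differentiableAt_uncurry (h : DifferentiableAt ℝ u.uncurry (t, x)) :
    fderiv ℝ (u t) x = (fderiv ℝ u.uncurry (t, x)).comp (.inr ℝ ℝ E) :=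
  (h.hasFDerivAt.comp x (hasFDerivAt_prodMk_right t x)).fderiv

lemma eventually_differentiableAt_uncurry (h : ContDiffAt ℝ 2 u.uncurry (t, x)) :
    ∀ᶠ p in 𝓝 (t, x), DifferentiableAt ℝ u.uncurry p :=
  (h.eventually (by simp)).mono fun _ hp ↦ hp.differentiableAt two_ne_zero

lemma hasFDerivAt_fderiv_uncurry (h : ContDiffAt ℝ 2 u.uncurry (t, x)) :
    HasFDerivAt (fderiv ℝ u.uncurry) (fderiv ℝ (fderiv ℝ u.uncurry) (t, x)) (t, x) :=
  ((h.fderiv_right (m := 1) (by norm_num)).differentiableAt one_ne_zero).hasFDerivAt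

lemma deriv_deriv_of_contDiffAt_uncurry (h : ContDiffAt ℝ 2 u.uncurry (t, x)) :
    deriv (deriv (u · x)) t = fderiv ℝ (fderiv ℝ u.uncurry) (t, x) (1, 0) (1, 0) := by
  have hderiv : deriv (u · x) =ᶠ[𝓝 t] fun s ↦ fderiv ℝ u.uncurry (s, x) (1, 0) :=
    ((by fun_prop : Continuous fun s : ℝ ↦ (s, x)).tendsto t).eventually
      (eventually_differentiableAt_uncurry h) |>.mono fun s hs ↦
        (hasDerivAt_of_differentiableAt_uncurry hs).deriv
  have hline := (hasFDerivAt_fderiv_uncurry h).comp_hasDerivAt t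
    ((hasDerivAt_id t).prodMk (hasDerivAt_const t x))
  simpa [hderiv.deriv_eq] using (hline.clm_apply (hasDerivAt_const t ((1, 0) : ℝ × E))).deriv

lemma fderiv_fderiv_of_contDiffAt_uncurry (h : ContDiffAt ℝ 2 u.uncurry (t, x)) (v w : E) :
    fderiv ℝ (fderiv ℝ (u t)) x v w = fderiv ℝ (fderiv ℝ u.uncurry) (t, x) (0, v) (0, w) := by
  have hfderiv : fderiv ℝ (u t) =ᶠ[𝓝 x] fun x ↦ (fderiv ℝ u.uncurry (t, x)).comp (.inr ℝ ℝ E) :=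
    ((by fun_prop : Continuous fun x : E ↦ (t, x)).tendsto x).eventually
      (eventually_differentiableAt_uncurry h) |>.mono fun x hx ↦
        fderiv_of_differentiableAt_uncurry hx
  have hslice := ((hasFDerivAt_fderiv_uncurry h).comp x (hasFDerivAt_prodMk_right t x)).clm_comp
    (hasFDerivAt_const (ContinuousLinearMap.inr ℝ ℝ E) x)
  rw [hfderiv.fderiv_eq,
    HasFDerivAt.fderiv (f := fun x ↦ (fderiv ℝ u.uncurry (t, x)).comp (.inr ℝ ℝ E)) hslice]
  simp

end Slices

lemma fderiv_fderiv_null_of_wave [InnerProductSpace ℝ E] [FiniteDimensional ℝ E]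
    {u : ℝ → E → ℝ} {t : ℝ} {x : E}
    (h : ContDiffAt ℝ 2 u.uncurry (t, x)) (hwave : deriv (deriv (u · x)) t = Δ (u t) x)
    {c : ℝ} (hc : c * c = 1) (σ : E) :
    fderiv ℝ (fderiv ℝ u.uncurry) (t, x) (-c, σ) (c, σ) =
      fderiv ℝ (fderiv ℝ (u t)) x σ σ - Δ (u t) x := by
  rw [← hwave, deriv_deriv_of_contDiffAt_uncurry h, fderiv_fderiv_of_contDiffAt_uncurry h]
  have hincoming : ((-c, σ) : ℝ × E) = (0, σ) - c • (1, 0) := by simp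
  have houtgoing : ((c, σ) : ℝ × E) = (0, σ) + c • (1, 0) := by simp
  have hsymm := h.isSymmSndFDerivAt (by simp) (0, σ) (1, 0)
  rw [hincoming, houtgoing]
  simp only [map_sub, map_add, map_smul, sub_apply, smul_apply, smul_eq_mul]
  linear_combination c * hsymm - fderiv ℝ (fderiv ℝ u.uncurry) (t, x) (1, 0) (1, 0) * hc

section Slab

variable [NormedSpace ℝ E] {u : ℝ → E → F} {T t : ℝ}

lemma uniqueDiffOn_Icc_prod_univ (hT : 0 < T) :
    UniqueDiffOn ℝ (Icc 0 T ×ˢ (univ : Set E)) :=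
  (uniqueDiffOn_Icc hT).prod uniqueDiffOn_univ

omit [NormedSpace ℝ E] in
lemma Icc_prod_univ_mem_nhds (ht : t ∈ Ioo 0 T) (x : E) :
    Icc 0 T ×ˢ (univ : Set E) ∈ 𝓝 (t, x) :=
  prod_mem_nhds (Icc_mem_nhds ht.1 ht.2) univ_mem

lemma contDiffAt_uncurry (hreg : ContDiffOn ℝ 2 u.uncurry (Icc 0 T ×ˢ univ)) (ht : t ∈ Ioo 0 T)
    (x : E) : ContDiffAt ℝ 2 u.uncurry (t, x) :=
  hreg.contDiffAt (Icc_prod_univ_mem_nhds ht x)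

lemma contDiff_slice (hreg : ContDiffOn ℝ 2 u.uncurry (Icc 0 T ×ˢ univ)) (ht : t ∈ Ioo 0 T) :
    ContDiff ℝ 2 (u t) :=
  contDiff_iff_contDiffAt.2 fun x ↦
    (contDiffAt_uncurry hreg ht x).comp x (contDiffAt_const.prodMk contDiffAt_id)

lemma continuousOn_fderiv_fderiv_uncurry (hreg : ContDiffOn ℝ 2 u.uncurry (Icc 0 T ×ˢ univ)) :
    ContinuousOn (fderiv ℝ (fderiv ℝ u.uncurry)) (Ioo 0 T ×ˢ univ) := fun ⟨t, x⟩ ⟨ht, _⟩ ↦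
  (((contDiffAt_uncurry hreg ht x).fderiv_right (m := 1) (by norm_num)).fderiv_right (m := 0)
    (by norm_num)).continuousAt.continuousWithinAt

lemma continuousOn_fderivWithin_uncurry (hT : 0 < T)
    (hreg : ContDiffOn ℝ 2 u.uncurry (Icc 0 T ×ˢ univ)) :
    ContinuousOn (fderivWithin ℝ u.uncurry (Icc 0 T ×ˢ univ)) (Icc 0 T ×ˢ univ) :=
  hreg.continuousOn_fderivWithin (uniqueDiffOn_Icc_prod_univ hT) (by norm_num)

lemma hasFDerivWithinAt_uncurry (hreg : ContDiffOn ℝ 2 u.uncurry (Icc 0 T ×ˢ univ))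
    (ht : t ∈ Icc 0 T) (x : E) :
    HasFDerivWithinAt u.uncurry (fderivWithin ℝ u.uncurry (Icc 0 T ×ˢ univ) (t, x))
      (Icc 0 T ×ˢ univ) (t, x) :=
  (hreg.differentiableOn two_ne_zero (t, x) ⟨ht, mem_univ x⟩).hasFDerivWithinAt

lemma hasDerivWithinAt_time (hreg : ContDiffOn ℝ 2 u.uncurry (Icc 0 T ×ˢ univ))
    (ht : t ∈ Icc 0 T) (x : E) :
    HasDerivWithinAt (u · x) (fderivWithin ℝ u.uncurry (Icc 0 T ×ˢ univ) (t, x) (1, 0))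
      (Icc 0 T) t :=
  HasFDerivWithinAt.comp_hasDerivWithinAt (f := fun s ↦ (s, x)) t
    (hasFDerivWithinAt_uncurry hreg ht x)
    ((hasDerivAt_id t).prodMk (hasDerivAt_const t x)).hasDerivWithinAt
    fun _ hs ↦ ⟨hs, mem_univ x⟩

lemma fderivWithin_uncurry_space_eq_zero (hT : 0 ≤ T)
    (hreg : ContDiffOn ℝ 2 u.uncurry (Icc 0 T ×ˢ univ)) (hinit : ∀ x, u 0 x = 0) (x v : E) :
    fderivWithin ℝ u.uncurry (Icc 0 T ×ˢ univ) (0, x) (0, v) = 0 := by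
  have hslice := (hasFDerivWithinAt_uncurry hreg (left_mem_Icc.2 hT) x).comp_hasFDerivAt x
    (hasFDerivAt_prodMk_right (𝕜 := ℝ) (0 : ℝ) x)
    (.of_forall fun y ↦ ⟨left_mem_Icc.2 hT, mem_univ y⟩)
  rw [show u.uncurry ∘ Prod.mk 0 = fun _ ↦ 0 from funext hinit] at hslice
  simpa using DFunLike.congr_fun (hslice.unique (hasFDerivAt_const (0 : F) x)) v

lemma eq_zero_of_deriv_eq_zero (hreg : ContDiffOn ℝ 2 u.uncurry (Icc 0 T ×ˢ univ)) {x : E}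
    (hinit : u 0 x = 0) (hobs : ∀ t ∈ Ioo 0 T, deriv (u · x) t = 0) (ht : t ∈ Icc 0 T) :
    u t x = 0 := by
  have hgrow := norm_le_add_mul_exp_sub_exp (g := (u · x)) (A := 0) (κ := 0) ht.1
    ((hreg.continuousOn.comp (f := fun s ↦ (s, x)) (by fun_prop) fun s hs ↦ ⟨hs, mem_univ x⟩).mono
      (Icc_subset_Icc_right ht.2)) fun s hs ↦ by
        have hs' : s ∈ Ioo 0 T := ⟨hs.1, hs.2.trans_le ht.2⟩
        have hd := hasDerivAt_of_differentiableAt_uncurry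
          ((contDiffAt_uncurry hreg hs' x).differentiableAt two_ne_zero)
        exact ⟨0, hobs s hs' ▸ hd.differentiableAt.hasDerivAt, by simp⟩
  simpa [hinit] using hgrow

lemma fderivWithin_uncurry_eq_zero {ω : Set E} (hω : IsOpen ω)
    (hreg : ContDiffOn ℝ 2 u.uncurry (Icc 0 T ×ˢ univ)) (hinit : ∀ x, u 0 x = 0)
    (hobs : ∀ t ∈ Ioo 0 T, ∀ x ∈ ω, deriv (u · x) t = 0) (ht : t ∈ Icc 0 T) {x : E} (hx : x ∈ ω) :
    fderivWithin ℝ u.uncurry (Icc 0 T ×ˢ univ) (t, x) = 0 := by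
  have hzero : ∀ s ∈ Icc 0 T, ∀ z ∈ ω, u s z = 0 := fun s hs z hz ↦
    eq_zero_of_deriv_eq_zero hreg (hinit z) (fun τ hτ ↦ hobs τ hτ z hz) hs
  have hloc : u.uncurry =ᶠ[𝓝[Icc 0 T ×ˢ univ] (t, x)] fun _ ↦ 0 := by
    filter_upwards [self_mem_nhdsWithin,
      mem_nhdsWithin_of_mem_nhds (prod_mem_nhds univ_mem (hω.mem_nhds hx))] with p hp hp'
    exact hzero p.1 hp.1 p.2 hp'.2
  rw [hloc.fderivWithin_eq (hzero t ht x hx), fderivWithin_fun_const, Pi.zero_apply]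

end Slab

end SpaceTime

section NullDerivatives

variable {E : Type*} [NormedAddCommGroup E] [InnerProductSpace ℝ E] {u : ℝ → E → ℝ} {T : ℝ}

lemma continuousOn_fderivWithin_sphere (hT : 0 < T)
    (hreg : ContDiffOn ℝ 2 u.uncurry (Icc 0 T ×ˢ univ)) (y : E) (c : ℝ) :
    ContinuousOn (fun q : (ℝ × ℝ) × sphere (0 : E) 1 ↦ fderivWithin ℝ u.uncurry (Icc 0 T ×ˢ univ)
      (q.1.1, y + q.1.2 • (q.2 : E)) (c, (q.2 : E))) ((Icc 0 T ×ˢ univ) ×ˢ univ) :=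
  ((continuousOn_fderivWithin_uncurry hT hreg).comp
    (f := fun q : (ℝ × ℝ) × sphere (0 : E) 1 ↦ (q.1.1, y + q.1.2 • (q.2 : E)))
    (by fun_prop) fun q hq ↦ ⟨hq.1.1, mem_univ _⟩).clm_apply (by fun_prop)

lemma continuousOn_fderiv_fderiv_characteristic
    (hreg : ContDiffOn ℝ 2 u.uncurry (Icc 0 T ×ˢ univ)) (y : E) (c a : ℝ) :
    ContinuousOn (fun q : ℝ × sphere (0 : E) 1 ↦ fderiv ℝ (fderiv ℝ u.uncurry)
      (a - c * q.1, y + q.1 • (q.2 : E)) (-c, (q.2 : E)) (c, (q.2 : E)))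
      ({ρ : ℝ | a - c * ρ ∈ Ioo 0 T} ×ˢ univ) :=
  (((continuousOn_fderiv_fderiv_uncurry hreg).comp
    (f := fun q : ℝ × sphere (0 : E) 1 ↦ (a - c * q.1, y + q.1 • (q.2 : E)))
    (by fun_prop) fun q hq ↦ ⟨hq.1, mem_univ _⟩).clm_apply (by fun_prop)).clm_apply (by fun_prop)

lemma hasDerivAt_fderivWithin_characteristic
    (hreg : ContDiffOn ℝ 2 u.uncurry (Icc 0 T ×ˢ univ)) (y : E) (c a : ℝ) {ρ : ℝ}
    (hρ : a - c * ρ ∈ Ioo 0 T) (σ : E) :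
    HasDerivAt (fun ρ ↦ fderivWithin ℝ u.uncurry (Icc 0 T ×ˢ univ) (a - c * ρ, y + ρ • σ) (c, σ))
      (fderiv ℝ (fderiv ℝ u.uncurry) (a - c * ρ, y + ρ • σ) (-c, σ) (c, σ)) ρ := by
  have hline : HasDerivAt (fun ρ : ℝ ↦ (a - c * ρ, y + ρ • σ)) (-c, σ) ρ := by
    refine .prodMk ?_ ?_
    · simpa using ((hasDerivAt_id ρ).const_mul c).const_sub a
    · simpa using ((hasDerivAt_id ρ).smul_const σ).const_add y
  have hloc : fderivWithin ℝ u.uncurry (Icc 0 T ×ˢ univ) =ᶠ[𝓝 (a - c * ρ, y + ρ • σ)]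
      fderiv ℝ u.uncurry := by
    filter_upwards [prod_mem_nhds (Ioo_mem_nhds hρ.1 hρ.2) univ_mem] with p hp
    exact fderivWithin_of_mem_nhds (Icc_prod_univ_mem_nhds hp.1 p.2)
  have hpath := HasFDerivAt.comp_hasDerivAt (l := fderivWithin ℝ u.uncurry (Icc 0 T ×ˢ univ))
    (l' := fderiv ℝ (fderiv ℝ u.uncurry) (a - c * ρ, y + ρ • σ)) ρ
    ((hasFDerivAt_fderiv_uncurry (contDiffAt_uncurry hreg hρ _)).congr_of_eventuallyEq hloc) hline
  simpa using hpath.clm_apply (hasDerivAt_const ρ ((c, σ) : ℝ × E))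

variable [FiniteDimensional ℝ E] [MeasurableSpace E] [BorelSpace E]

/-- The integral over `σ` in the unit sphere of the derivative of `u` at `(t, y + r σ)` in the
direction `(c, σ)`, as a function of `(t, r)`. For `c = 1` and `c = -1` the direction is null.
The derivative is taken within the time slab `[0, T]` so as to be one-sided at its ends. -/
noncomputable def sphericalDeriv (u : ℝ → E → ℝ) (T : ℝ) (y : E) (c : ℝ) (p : ℝ × ℝ) : ℝ :=
  ∫ σ : sphere (0 : E) 1, fderivWithin ℝ u.uncurry (Icc 0 T ×ˢ univ)
    (p.1, y + p.2 • (σ : E)) (c, (σ : E)) ∂volume.toSphere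

lemma continuousOn_sphericalDeriv (hT : 0 < T)
    (hreg : ContDiffOn ℝ 2 u.uncurry (Icc 0 T ×ˢ univ)) (y : E) (c : ℝ) :
    ContinuousOn (sphericalDeriv u T y c) (Icc 0 T ×ˢ univ) :=
  continuousOn_integral_of_compact_support isCompact_univ
    (continuousOn_fderivWithin_sphere hT hreg y c) fun _ σ _ hσ ↦ absurd (mem_univ σ) hσ

lemma integrable_fderivWithin_sphere (hT : 0 < T)
    (hreg : ContDiffOn ℝ 2 u.uncurry (Icc 0 T ×ˢ univ)) (y : E) (c : ℝ) {t : ℝ}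
    (ht : t ∈ Icc 0 T) (r : ℝ) :
    Integrable (fun σ : sphere (0 : E) 1 ↦ fderivWithin ℝ u.uncurry (Icc 0 T ×ˢ univ)
      (t, y + r • (σ : E)) (c, (σ : E))) volume.toSphere :=
  integrable_of_continuous_of_compactSpace <|
    (continuousOn_fderivWithin_sphere hT hreg y c).comp_continuous
      (by fun_prop : Continuous fun σ : sphere (0 : E) 1 ↦ ((t, r), σ))
      fun σ ↦ ⟨⟨ht, mem_univ r⟩, mem_univ σ⟩

lemma sphericalDeriv_add_sphericalDeriv (hT : 0 < T)
    (hreg : ContDiffOn ℝ 2 u.uncurry (Icc 0 T ×ˢ univ)) (y : E) {t : ℝ} (ht : t ∈ Icc 0 T)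
    (r : ℝ) :
    sphericalDeriv u T y 1 (t, r) + sphericalDeriv u T y (-1) (t, r) =
      2 * sphericalDeriv u T y 0 (t, r) := by
  have hint (c : ℝ) := integrable_fderivWithin_sphere hT hreg y c ht r
  simp only [sphericalDeriv]
  rw [← integral_add (hint 1) (hint (-1)), ← integral_const_mul]
  refine integral_congr_ae (.of_forall fun σ ↦ ?_)
  have hdir : ((1, (σ : E)) : ℝ × E) + (-1, (σ : E)) = (2 : ℝ) • (0, (σ : E)) := by
    simp [two_smul]
  simp only [← map_add, hdir, map_smul, smul_eq_mul]

lemma sphericalDeriv_sub_sphericalDeriv (hT : 0 < T)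
    (hreg : ContDiffOn ℝ 2 u.uncurry (Icc 0 T ×ˢ univ)) (y : E) {t : ℝ} (ht : t ∈ Icc 0 T)
    (r : ℝ) :
    sphericalDeriv u T y 1 (t, r) - sphericalDeriv u T y (-1) (t, r) =
      2 * ∫ σ : sphere (0 : E) 1, fderivWithin ℝ u.uncurry (Icc 0 T ×ˢ univ)
        (t, y + r • (σ : E)) (1, 0) ∂volume.toSphere := by
  have hint (c : ℝ) := integrable_fderivWithin_sphere hT hreg y c ht r
  simp only [sphericalDeriv]
  rw [← integral_sub (hint 1) (hint (-1)), ← integral_const_mul]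
  refine integral_congr_ae (.of_forall fun σ ↦ ?_)
  have hdir : ((1, (σ : E)) : ℝ × E) - (-1, (σ : E)) = (2 : ℝ) • (1, 0) := by
    norm_num [one_add_one_eq_two]
  simp only [← map_sub, hdir, map_smul, smul_eq_mul]

lemma sphericalDeriv_zero_eq_integral_fderiv
    (hreg : ContDiffOn ℝ 2 u.uncurry (Icc 0 T ×ˢ univ)) (y : E) {t : ℝ} (ht : t ∈ Ioo 0 T)
    (r : ℝ) :
    sphericalDeriv u T y 0 (t, r) =
      ∫ σ : sphere (0 : E) 1, fderiv ℝ (u t) (y + r • (σ : E)) σ ∂volume.toSphere := by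
  refine integral_congr_ae (.of_forall fun σ ↦ ?_)
  simp only [fderivWithin_of_mem_nhds (Icc_prod_univ_mem_nhds ht _),
    fderiv_of_differentiableAt_uncurry
      ((contDiffAt_uncurry hreg ht _).differentiableAt two_ne_zero)]
  simp

lemma hasDerivAt_sphericalDeriv_characteristic
    (hreg : ContDiffOn ℝ 2 u.uncurry (Icc 0 T ×ˢ univ)) (y : E) (c a : ℝ) {ρ : ℝ}
    (hρ : a - c * ρ ∈ Ioo 0 T) :
    HasDerivAt (fun ρ ↦ sphericalDeriv u T y c (a - c * ρ, ρ))
      (∫ σ : sphere (0 : E) 1, fderiv ℝ (fderiv ℝ u.uncurry) (a - c * ρ, y + ρ • (σ : E))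
        (-c, (σ : E)) (c, (σ : E)) ∂volume.toSphere) ρ := by
  have hopen : IsOpen {ρ : ℝ | a - c * ρ ∈ Ioo 0 T} := isOpen_Ioo.preimage (by fun_prop)
  have hfirst : ContinuousOn (fun q : ℝ × sphere (0 : E) 1 ↦
      fderivWithin ℝ u.uncurry (Icc 0 T ×ˢ univ) (a - c * q.1, y + q.1 • (q.2 : E))
        (c, (q.2 : E))) ({ρ : ℝ | a - c * ρ ∈ Ioo 0 T} ×ˢ univ) :=
    (continuousOn_fderivWithin_sphere (hρ.1.trans hρ.2) hreg y c).comp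
      (f := fun q : ℝ × sphere (0 : E) 1 ↦ ((a - c * q.1, q.1), q.2)) (by fun_prop)
      fun q hq ↦ ⟨⟨Ioo_subset_Icc_self hq.1, mem_univ _⟩, mem_univ _⟩
  exact hasDerivAt_integral_of_continuousOn
    (g := fun ρ (σ : sphere (0 : E) 1) ↦
      fderivWithin ℝ u.uncurry (Icc 0 T ×ˢ univ) (a - c * ρ, y + ρ • (σ : E)) (c, (σ : E)))
    (g' := fun ρ (σ : sphere (0 : E) 1) ↦
      fderiv ℝ (fderiv ℝ u.uncurry) (a - c * ρ, y + ρ • (σ : E)) (-c, (σ : E)) (c, (σ : E)))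
    hopen hfirst
    (continuousOn_fderiv_fderiv_characteristic hreg y c a)
    (fun r hr σ ↦ hasDerivAt_fderivWithin_characteristic hreg y c a hr σ) hρ

lemma exists_hasDerivAt_sphericalDeriv_of_wave [Nontrivial E]
    (hreg : ContDiffOn ℝ 2 u.uncurry (Icc 0 T ×ˢ univ))
    (hwave : ∀ t ∈ Ioo 0 T, ∀ x, deriv (deriv (u · x)) t = Δ (u t) x) (y : E) {c : ℝ}
    (hc : c * c = 1) (a : ℝ) {ε ρ : ℝ} (hε : 0 < ε) (hερ : ε ≤ ρ) (ht : a - c * ρ ∈ Ioo 0 T) :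
    ∃ d, HasDerivAt (fun ρ ↦ sphericalDeriv u T y c (a - c * ρ, ρ)) d ρ ∧
      ‖d‖ ≤ ((finrank ℝ E : ℝ) - 1) / (2 * ε) * (‖sphericalDeriv u T y 1 (a - c * ρ, ρ)‖ +
        ‖sphericalDeriv u T y (-1) (a - c * ρ, ρ)‖) := by
  have hρ : 0 < ρ := hε.trans_le hερ
  have hdim : 0 ≤ (finrank ℝ E : ℝ) - 1 :=
    sub_nonneg.2 (mod_cast finrank_pos (R := ℝ) (M := E))
  refine ⟨_, hasDerivAt_sphericalDeriv_characteristic hreg y c a ht, ?_⟩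
  have hdarboux := mul_integral_sphere_fderiv_fderiv_sub_laplacian (contDiff_slice hreg ht) y ρ
  simp only [← fderiv_fderiv_null_of_wave (contDiffAt_uncurry hreg ht _) (hwave _ ht _) hc,
    ← sphericalDeriv_zero_eq_integral_fderiv hreg y ht] at hdarboux
  have hsum := sphericalDeriv_add_sphericalDeriv (ht.1.trans ht.2) hreg y
    (Ioo_subset_Icc_self ht) ρ
  set P := sphericalDeriv u T y 1 (a - c * ρ, ρ)
  set Q := sphericalDeriv u T y (-1) (a - c * ρ, ρ)
  set M := sphericalDeriv u T y 0 (a - c * ρ, ρ)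
  set d := ∫ σ : sphere (0 : E) 1, fderiv ℝ (fderiv ℝ u.uncurry) (a - c * ρ, y + ρ • (σ : E))
    (-c, (σ : E)) (c, (σ : E)) ∂volume.toSphere
  have hd : d = -(((finrank ℝ E : ℝ) - 1) / (2 * ρ) * (P + Q)) := by
    rw [hsum]
    field_simp
    linear_combination hdarboux
  calc
    ‖d‖ = ((finrank ℝ E : ℝ) - 1) / (2 * ρ) * ‖P + Q‖ := by
      rw [hd, norm_neg, norm_mul, Real.norm_of_nonneg (by positivity)]
    _ ≤ _ := by
      gcongr
      exact norm_add_le P Q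

variable {ω : Set E}

lemma sphericalDeriv_eq_zero_of_sphere_subset (hω : IsOpen ω)
    (hreg : ContDiffOn ℝ 2 u.uncurry (Icc 0 T ×ˢ univ)) (hinit : ∀ x, u 0 x = 0)
    (hobs : ∀ t ∈ Ioo 0 T, ∀ x ∈ ω, deriv (u · x) t = 0) (y : E) (c : ℝ) {t r : ℝ}
    (ht : t ∈ Icc 0 T) (hr : sphere y |r| ⊆ ω) : sphericalDeriv u T y c (t, r) = 0 := by
  refine integral_eq_zero_of_ae (.of_forall fun σ ↦ ?_)
  simp [fderivWithin_uncurry_eq_zero hω hreg hinit hobs ht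
    (hr (by simp [norm_smul] : y + r • (σ : E) ∈ _))]

lemma isCharacteristicSystem_sphericalDeriv [Nontrivial E] (hω : IsOpen ω)
    (hreg : ContDiffOn ℝ 2 u.uncurry (Icc 0 T ×ˢ univ))
    (hwave : ∀ t ∈ Ioo 0 T, ∀ x, deriv (deriv (u · x)) t = Δ (u t) x)
    (hinit : ∀ x, u 0 x = 0) (hobs : ∀ t ∈ Ioo 0 T, ∀ x ∈ ω, deriv (u · x) t = 0) {y : E} {ε : ℝ}
    (hT : 0 < T) (hε : 0 < ε) (hεω : sphere y ε ⊆ ω) :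
    IsCharacteristicSystem (sphericalDeriv u T y 1) (sphericalDeriv u T y (-1)) ε T
      (((finrank ℝ E : ℝ) - 1) / (2 * ε)) := by
  have hsubset : characteristicTriangle ε T ⊆ Icc 0 T ×ˢ univ := fun p ⟨ht, hr, htr⟩ ↦
    ⟨⟨ht, by linarith⟩, mem_univ _⟩
  have hboundary (c : ℝ) {t : ℝ} (ht : (t, ε) ∈ characteristicTriangle ε T) :
      sphericalDeriv u T y c (t, ε) = 0 :=
    sphericalDeriv_eq_zero_of_sphere_subset hω hreg hinit hobs y c (hsubset ht).1
      (by rwa [abs_of_pos hε])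
  refine ⟨(continuousOn_sphericalDeriv hT hreg y 1).mono hsubset,
    (continuousOn_sphericalDeriv hT hreg y (-1)).mono hsubset, fun t ↦ hboundary 1,
    fun t ↦ hboundary (-1), fun r hr ↦ ?_, fun t r ht hr htr ↦ ?_, fun t r ht hr htr ↦ ?_⟩
  · have hsum := sphericalDeriv_add_sphericalDeriv hT hreg y (hsubset hr).1 r
    have hspace : sphericalDeriv u T y 0 (0, r) = 0 := by
      simp [sphericalDeriv, fderivWithin_uncurry_space_eq_zero hT.le hreg hinit]
    rw [hspace, mul_zero, add_eq_zero_iff_eq_neg'] at hsum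
    rw [hsum, norm_neg]
  · simpa using exists_hasDerivAt_sphericalDeriv_of_wave hreg hwave y (c := 1) (by norm_num)
      (t + r) hε hr.le ⟨by simpa, by linarith⟩
  · simpa using exists_hasDerivAt_sphericalDeriv_of_wave hreg hwave y (c := -1) (by norm_num)
      (t - r) hε hr.le ⟨by simpa, by linarith⟩

lemma integral_sphere_initial_velocity_eq_zero [Nontrivial E] (hω : IsOpen ω)
    (hreg : ContDiffOn ℝ 2 u.uncurry (Icc 0 T ×ˢ univ))
    (hwave : ∀ t ∈ Ioo 0 T, ∀ x, deriv (deriv (u · x)) t = Δ (u t) x)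
    (hinit : ∀ x, u 0 x = 0) (hobs : ∀ t ∈ Ioo 0 T, ∀ x ∈ ω, deriv (u · x) t = 0) {y : E}
    (hy : y ∈ ω) {r : ℝ} (hr : r ∈ Ioo 0 T) :
    ∫ σ : sphere (0 : E) 1, fderivWithin ℝ u.uncurry (Icc 0 T ×ˢ univ) (0, y + r • (σ : E)) (1, 0)
      ∂volume.toSphere = 0 := by
  have hT : 0 < T := hr.1.trans hr.2
  obtain ⟨ε₀, hε₀, hε₀ω⟩ := nhds_basis_closedBall.mem_iff.1 (hω.mem_nhds hy)
  set ε := min ε₀ r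
  have hε : 0 < ε := lt_min hε₀ hr.1
  have hεω : sphere y ε ⊆ ω :=
    sphere_subset_closedBall.trans ((closedBall_subset_closedBall (min_le_left _ _)).trans hε₀ω)
  have hdim : 0 ≤ (finrank ℝ E : ℝ) - 1 :=
    sub_nonneg.2 (mod_cast finrank_pos (R := ℝ) (M := E))
  obtain ⟨hP, hQ⟩ :=
    (isCharacteristicSystem_sphericalDeriv hω hreg hwave hinit hobs hT hε hεω).eq_zero
      (p := (0, r)) (by positivity) ⟨le_rfl, min_le_right _ _, by linarith [hr.2]⟩
  have hdiff := sphericalDeriv_sub_sphericalDeriv hT hreg y (left_mem_Icc.2 hT.le) r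
  rw [hP, hQ] at hdiff
  linarith

end NullDerivatives

theorem unique_continuation_free_wave_general {E : Type*} [NormedAddCommGroup E]
    [InnerProductSpace ℝ E] [FiniteDimensional ℝ E] {ω : Set E} (hω : IsOpen ω) {T : ℝ}
    {u : ℝ → E → ℝ} (hreg : ContDiffOn ℝ 2 u.uncurry (Icc 0 T ×ˢ univ))
    (hwave : ∀ t ∈ Ioo 0 T, ∀ x, deriv (deriv (u · x)) t = Δ (u t) x)
    (hinit : ∀ x, u 0 x = 0) (hobs : ∀ t ∈ Ioo 0 T, ∀ x ∈ ω, deriv (u · x) t = 0) :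
    ∀ x ∈ thickening T ω, HasDerivWithinAt (u · x) 0 (Icc 0 T) 0 := by
  borelize E
  intro x hx
  obtain ⟨y, hy, hxy⟩ := mem_thickening_iff.1 hx
  have hT : 0 < T := dist_nonneg.trans_lt hxy
  have hvelocity : fderivWithin ℝ u.uncurry (Icc 0 T ×ˢ univ) (0, x) (1, 0) = 0 := by
    cases subsingleton_or_nontrivial E
    · rw [fderivWithin_uncurry_eq_zero hω hreg hinit hobs (left_mem_Icc.2 hT.le)
        (Subsingleton.elim y x ▸ hy), zero_apply]
    · have hcont : Continuous fun x ↦ fderivWithin ℝ u.uncurry (Icc 0 T ×ˢ univ) (0, x) (1, 0) :=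
        ((continuousOn_fderivWithin_uncurry hT hreg).comp_continuous (by fun_prop)
          fun x ↦ ⟨left_mem_Icc.2 hT.le, mem_univ x⟩).clm_apply continuous_const
      exact (hasVanishingRadialMoments_of_integral_sphere_eq_zero hcont fun y hy r hr ↦
        integral_sphere_initial_velocity_eq_zero hω hreg hwave hinit hobs hy
          hr).eqOn_zero_thickening hω hcont hx
  simpa only [hvelocity] using hasDerivWithinAt_time hreg (left_mem_Icc.2 hT.le) x

lemma lap_eq_laplacian {n : ℕ} (f : EuclideanSpace ℝ (Fin n) → ℝ)
    (x : EuclideanSpace ℝ (Fin n)) : lap f x = Δ f x := by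
  simp [lap, laplacian_eq_iteratedFDeriv_orthonormalBasis f (EuclideanSpace.basisFun (Fin n) ℝ)]

lemma deriv_eq_zero_of_hasDerivWithinAt_zero {𝕜 F : Type*} [NontriviallyNormedField 𝕜]
    [NormedAddCommGroup F] [NormedSpace 𝕜 F] {f : 𝕜 → F} {s : Set 𝕜} {t : 𝕜}
    (hs : UniqueDiffWithinAt 𝕜 s t) (hf : HasDerivWithinAt f 0 s t) : deriv f t = 0 := by
  by_cases hd : DifferentiableAt 𝕜 f t
  · exact hs.eq_deriv s hd.hasDerivAt.hasDerivWithinAt hf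
  · exact deriv_zero_of_not_differentiableAt hd

theorem unique_continuation_free_wave (n : ℕ) (hn : 1 ≤ n)
    (ω : Set (EuclideanSpace ℝ (Fin n))) (hωne : ω.Nonempty) (hωo : IsOpen ω)
    (T : ℝ) (hT : 0 < T) (u : ℝ → EuclideanSpace ℝ (Fin n) → ℝ)
    -- u is of class C² on [0,T] × ℝⁿ
    (hreg : ContDiffOn ℝ 2 (Function.uncurry u) (Set.Icc 0 T ×ˢ (Set.univ : Set (EuclideanSpace ℝ (Fin n)))))
    -- u solves the free wave equation on [0,T] × ℝⁿ
    (hwave : ∀ t ∈ Set.Icc (0 : ℝ) T, ∀ x : EuclideanSpace ℝ (Fin n),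
      pdt (pdt u) t x = lap (u t) x)
    -- vanishing initial position
    (hinit : ∀ x : EuclideanSpace ℝ (Fin n), u 0 x = 0)
    -- observation: ∂ₜu vanishes on (0,T) × ω
    (hobs : ∀ t ∈ Set.Ioo (0 : ℝ) T, ∀ x ∈ ω, pdt u t x = 0) :
    ∀ x : EuclideanSpace ℝ (Fin n), Metric.infDist x ω < T → pdt u 0 x = 0 := by
  intro x hx
  refine deriv_eq_zero_of_hasDerivWithinAt_zero (uniqueDiffOn_Icc hT 0 (left_mem_Icc.2 hT.le)) ?_
  exact unique_continuation_free_wave_general hωo hreg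
    (fun t ht x ↦ (hwave t (Ioo_subset_Icc_self ht) x).trans (lap_eq_laplacian (u t) x)) hinit hobs
    x ((mem_thickening_iff_infDist_lt hωne).2 hx)
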